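/- arXiv:2411.00835 — 3 statements merged into one kernel-verified Lean document; each statement's English description precedes it below -/
import Mathlib

section
/- Let N and D be positive integers with N ≥ 2, let Ã ∈ ℝ^{N×N} be the matrix with every entry equal to 1/N (the degree-normalized adjacency matrix of the complete graph with self-loops on N nodes), and let W ∈ ℝ^{D×D} be any matrix. Then the class of functions f̂ : ℝ^{N×D} → ℝ of the form f̂ = MLP ∘ L, where L(X) = ÃXW and MLP ranges over all multilayer perceptrons with SiLU activation from ℝ^{N×D} to ℝ, is NOT a universal approximator in C(ℝ^{N×D}): there exist a continuous function f : ℝ^{N×D} → ℝ, an ε > 0, and a nonempty compact set K ⊂ ℝ^{N×D} such that every function f̂ in the class satisfies max_{X∈K} |f(X) − f̂(X)| ≥ ε. -/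
/-- The SiLU activation function: `SiLU(x) = x / (1 + e^{-x})`. -/
noncomputable def silu (x : ℝ) : ℝ := x / (1 + Real.exp (-x))

/-- `IsMLPLayer V k g` says that `g : V → ℝ^k` has the form
`A_L ∘ σ ∘ A_{L-1} ∘ ⋯ ∘ σ ∘ A_0` where each `A_i` is an affine map and `σ` applies
SiLU componentwise (the base case `L = 0` being a single affine map). -/
inductive IsMLPLayer (V : Type) [AddCommGroup V] [Module ℝ V] :
    (k : ℕ) → (V → (Fin k → ℝ)) → Prop
  | affine (k : ℕ) (A : V →ᵃ[ℝ] (Fin k → ℝ)) : IsMLPLayer V k ⇑A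
  | step (m k : ℕ) (A : (Fin m → ℝ) →ᵃ[ℝ] (Fin k → ℝ)) (g : V → Fin m → ℝ)
      (hg : IsMLPLayer V m g) : IsMLPLayer V k (fun v => A (fun i => silu (g v i)))

/-- A multilayer perceptron with SiLU activation from `V` to `ℝ`:
a map of the form `A_L ∘ σ ∘ A_{L-1} ∘ ⋯ ∘ σ ∘ A_0` with each `A_i` affine and
`σ` the componentwise SiLU activation. -/
def IsSiluMLP (V : Type) [AddCommGroup V] [Module ℝ V] (f : V → ℝ) : Prop :=
  (∃ A : V →ᵃ[ℝ] ℝ, f = ⇑A) ∨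
  (∃ (m : ℕ) (A : (Fin m → ℝ) →ᵃ[ℝ] ℝ) (g : V → Fin m → ℝ),
    IsMLPLayer V m g ∧ f = fun v => A (fun i => silu (g v i)))

/-! A universal approximator separates points, whereas a function of `Ã X W` cannot separate two
inputs with the same image. Two equal columns of `Ã` make `X ↦ Ã X W` non-injective, so a two-point
set already obstructs approximation, even with an arbitrary function in place of the network. -/

section UniversalApproximator

variable {X Y : Type*} [TopologicalSpace X]

/-- A set of real-valued functions is a universal approximator if every continuous function is
approximated by its members to within any `ε > 0`, uniformly on any nonempty compact set. The
members themselves are not required to be continuous. -/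
def IsUniversalApproximator (F : Set (X → ℝ)) : Prop :=
  ∀ f : X → ℝ, Continuous f → ∀ ε > (0 : ℝ), ∀ K : Set X, IsCompact K → K.Nonempty →
    ∃ g ∈ F, ∀ x ∈ K, |f x - g x| < ε

theorem IsUniversalApproximator.separatesPoints [T35Space X] {F : Set (X → ℝ)}
    (hF : IsUniversalApproximator F) : F.SeparatesPoints := by
  intro x y hxy
  obtain ⟨f, hf, hfxy⟩ := separatesPoints_continuous_of_t35Space hxy
  obtain ⟨g, hgF, hg⟩ := hF f hf (|f x - f y| / 2) (half_pos (abs_sub_pos.2 hfxy)) {x, y}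
    (Set.toFinite _).isCompact (Set.insert_nonempty x {y})
  refine ⟨g, hgF, fun hgxy => ?_⟩
  have hx : |f x - g x| < |f x - f y| / 2 := hg x (by simp)
  have hy : |g x - f y| < |f x - f y| / 2 := by
    rw [hgxy, abs_sub_comm]
    exact hg y (by simp)
  linarith [abs_sub_le (f x) (g x) (f y)]

theorem not_isUniversalApproximator_range_comp [T35Space X] {φ : X → Y}
    (hφ : ¬ Function.Injective φ) :
    ¬ IsUniversalApproximator (Set.range fun g : Y → ℝ => g ∘ φ) := by
  intro hF
  obtain ⟨x, y, hxy, hne⟩ := Function.not_injective_iff.1 hφ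
  obtain ⟨_, ⟨g, rfl⟩, hg⟩ := hF.separatesPoints hne
  exact hg (congrArg g hxy)

end UniversalApproximator

section Matrix

variable {l m n p R : Type*} [Fintype m]

theorem not_injective_mulVec_of_col_eq [NonAssocSemiring R] [Nontrivial R] {A : Matrix l m R}
    {i j : m} (hij : i ≠ j) (h : A.col i = A.col j) :
    ¬ Function.Injective A.mulVec := by
  classical
  intro hA
  have hsingle : (Pi.single i 1 : m → R) = Pi.single j 1 :=
    hA (by simpa only [Matrix.mulVec_single_one] using h)
  simpa [hij] using congrFun hsingle i

theorem mulVec_injective_of_mul_mul_injective [NonUnitalNonAssocSemiring R] [Fintype n]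
    [Nonempty n] {A : Matrix l m R} {W : Matrix n p R}
    (h : Function.Injective fun X : Matrix m n R => A * X * W) : Function.Injective A.mulVec := by
  intro v w hvw
  have hcol : A * Matrix.replicateCol n v = A * Matrix.replicateCol n w := by
    simp only [← Matrix.replicateCol_mulVec, hvw]
  exact Matrix.replicateCol_injective (h (congrArg (· * W) hcol))

theorem stmt_0_general [Fintype n] [Nonempty n] {A : Matrix l m ℝ}
    (hA : ¬ Function.Injective A.mulVec) (W : Matrix n p ℝ) :
    ∃ f : Matrix m n ℝ → ℝ, Continuous f ∧
      ∃ ε > (0 : ℝ), ∃ K : Set (Matrix m n ℝ), IsCompact K ∧ K.Nonempty ∧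
        ∀ g : Matrix l p ℝ → ℝ, ∃ X ∈ K, ε ≤ |f X - g (A * X * W)| := by
  have hφ : ¬ Function.Injective fun X : Matrix m n ℝ => A * X * W :=
    mt mulVec_injective_of_mul_mul_injective hA
  have : T35Space (Matrix m n ℝ) := inferInstanceAs (T35Space (m → n → ℝ))
  simpa only [IsUniversalApproximator, Set.exists_range_iff, Function.comp_apply, not_forall,
    not_exists, not_and, not_lt, exists_prop] using not_isUniversalApproximator_range_comp hφ

end Matrix

/-- **No universal approximation via graph convolution alone.**
For `N ≥ 2`, `D ≥ 1`, `Ã` the matrix with all entries `1/N`, and any `W ∈ ℝ^{D×D}`,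
the class of maps `MLP ∘ L` with `L(X) = Ã X W` and `MLP` a SiLU multilayer perceptron
is not a universal approximator in `C(ℝ^{N×D})`. -/
theorem stmt_0 (N D : ℕ) (hN : 2 ≤ N) (hD : 0 < D)
    (Atil : Matrix (Fin N) (Fin N) ℝ) (hA : ∀ i j, Atil i j = 1 / N)
    (W : Matrix (Fin D) (Fin D) ℝ) :
    ∃ f : Matrix (Fin N) (Fin D) ℝ → ℝ, Continuous f ∧
      ∃ ε > (0 : ℝ), ∃ K : Set (Matrix (Fin N) (Fin D) ℝ), IsCompact K ∧ K.Nonempty ∧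
        ∀ mlp : Matrix (Fin N) (Fin D) ℝ → ℝ, IsSiluMLP _ mlp →
          ∃ X ∈ K, ε ≤ |f X - mlp (Atil * X * W)| := by
  obtain ⟨i, j, hij⟩ := (Fin.nontrivial_iff_two_le.2 hN).exists_pair_ne
  have : Nonempty (Fin D) := Fin.pos_iff_nonempty.1 hD
  have hcol : Atil.col i = Atil.col j := by ext k; simp only [Matrix.col_apply, hA]
  obtain ⟨f, hf, ε, hε, K, hK, hK₀, h⟩ :=
    stmt_0_general (not_injective_mulVec_of_col_eq hij hcol) W
  exact ⟨f, hf, ε, hε, K, hK, hK₀, fun mlp _ => h mlp⟩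
end

section
/- Let N and D be positive integers and let Ã ∈ ℝ^{N×N} be the matrix with every entry equal to 1/N (the degree-normalized adjacency matrix of the complete graph with self-loops on N nodes). Then there exists a weight matrix W ∈ ℝ^{D×D} such that the class of functions f̂ : ℝ^{N×D} → ℝ of the form f̂ = MLP ∘ L, where L(X) = ÃXW + X and MLP ranges over all multilayer perceptrons with SiLU activation from ℝ^{N×D} to ℝ, IS a universal approximator in C(ℝ^{N×D}): for every continuous f : ℝ^{N×D} → ℝ, every ε > 0, and every nonempty compact K ⊂ ℝ^{N×D}, some f̂ in the class satisfies max_{X∈K} |f(X) − f̂(X)| < ε. -/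
/-! The functions `mlp ∘ φ` on a compact space form a linear space, because two networks can be run
in parallel: `silu t - silu (-t) = t` lets the shallower one be padded with identity layers. Since
`silu s + silu (-s) = s ^ 2 / 2 + o(s ^ 2)`, shrinking a network, applying one more SiLU layer and
scaling back up approximates its square uniformly. The closure of the class is therefore a
subalgebra, and Stone–Weierstrass applies as soon as `φ` is continuous and injective, which
`X ↦ Ã X W + X` is for `W = 0`. -/

open Asymptotics Filter Function Topology

section Silu

theorem silu_eq_mul_sigmoid (x : ℝ) : silu x = x * x.sigmoid := rfl

theorem continuous_silu : Continuous silu :=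
  continuous_id.mul continuous_sigmoid

theorem silu_sub_silu_neg (x : ℝ) : silu x - silu (-x) = x := by
  rw [silu_eq_mul_sigmoid, silu_eq_mul_sigmoid, Real.sigmoid_neg]
  ring

theorem silu_add_silu_neg (x : ℝ) : silu x + silu (-x) = x * (2 * x.sigmoid - 1) := by
  rw [silu_eq_mul_sigmoid, silu_eq_mul_sigmoid, Real.sigmoid_neg]
  ring

theorem silu_add_silu_neg_sub_isLittleO :
    (fun x ↦ silu x + silu (-x) - 1 / 2 * x ^ 2) =o[𝓝 0] fun x ↦ x ^ 2 := by
  have hderiv : HasDerivAt (fun x : ℝ ↦ 2 * x.sigmoid - 1) (1 / 2) 0 :=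
    (((Real.hasDerivAt_sigmoid 0).const_mul 2).sub_const 1).congr_deriv (by norm_num)
  have hlinear : (fun x : ℝ ↦ 2 * x.sigmoid - 1 - 1 / 2 * x) =o[𝓝 0] fun x ↦ x := by
    simpa [mul_comm] using hderiv.isLittleO
  refine ((isBigO_refl (fun x : ℝ ↦ x) (𝓝 0)).mul_isLittleO hlinear).congr (fun x ↦ ?_) fun x ↦ ?_
  · rw [silu_add_silu_neg]
    ring
  · ring

end Silu

section Append

variable {U : Type*} [AddCommGroup U] [Module ℝ U] {m n : ℕ}

/-- The affine map `u ↦ (A u, B u)`, with the two blocks of coordinates concatenated by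
`Fin.append`. -/
def affineAppend (A : U →ᵃ[ℝ] (Fin m → ℝ)) (B : U →ᵃ[ℝ] (Fin n → ℝ)) :
    U →ᵃ[ℝ] (Fin (m + n) → ℝ) :=
  AffineMap.pi (Fin.addCases (fun i ↦ (AffineMap.proj i).comp A) fun j ↦ (AffineMap.proj j).comp B)

theorem affineAppend_apply (A : U →ᵃ[ℝ] (Fin m → ℝ)) (B : U →ᵃ[ℝ] (Fin n → ℝ)) (u : U) :
    affineAppend A B u = Fin.append (A u) (B u) := by
  ext i
  induction i using Fin.addCases <;> simp [affineAppend]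

variable (m n)

/-- The projection of `ℝ^(m + n)` onto its first `m` coordinates. -/
def appendFst : (Fin (m + n) → ℝ) →ᵃ[ℝ] (Fin m → ℝ) :=
  (LinearMap.funLeft ℝ ℝ (Fin.castAdd n)).toAffineMap

/-- The projection of `ℝ^(m + n)` onto its last `n` coordinates. -/
def appendSnd : (Fin (m + n) → ℝ) →ᵃ[ℝ] (Fin n → ℝ) :=
  (LinearMap.funLeft ℝ ℝ (Fin.natAdd m)).toAffineMap

variable {m n}

theorem appendFst_append (x : Fin m → ℝ) (y : Fin n → ℝ) :
    appendFst m n (Fin.append x y) = x := by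
  ext i
  simp [appendFst, LinearMap.funLeft_apply]

theorem appendSnd_append (x : Fin m → ℝ) (y : Fin n → ℝ) :
    appendSnd m n (Fin.append x y) = y := by
  ext i
  simp [appendSnd, LinearMap.funLeft_apply]

end Append

section Network

variable {V : Type} [AddCommGroup V] [Module ℝ V]

namespace IsMLPLayer

variable {m n k : ℕ} {g : V → Fin m → ℝ} {h : V → Fin n → ℝ}

theorem affine_comp (hg : IsMLPLayer V m g) (A : (Fin m → ℝ) →ᵃ[ℝ] (Fin k → ℝ)) :
    IsMLPLayer V k fun v ↦ A (g v) := by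
  cases hg with
  | affine _ B => exact .affine k (A.comp B)
  | step l _ B g' hg' => exact .step l k (A.comp B) g' hg'

theorem append_swap (hgh : IsMLPLayer V (m + n) fun v ↦ Fin.append (g v) (h v)) :
    IsMLPLayer V (n + m) fun v ↦ Fin.append (h v) (g v) := by
  simpa only [affineAppend_apply, appendFst_append, appendSnd_append]
    using hgh.affine_comp (affineAppend (appendSnd m n) (appendFst m n))

-- The block `h` survives the activation as the difference `silu h - silu (-h) = h`.
theorem append_step (A : (Fin m → ℝ) →ᵃ[ℝ] (Fin k → ℝ))
    (hgh : IsMLPLayer V (m + n) fun v ↦ Fin.append (g v) (h v)) :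
    IsMLPLayer V (k + n) fun v ↦ Fin.append (A fun i ↦ silu (g v i)) (h v) := by
  have doubled : IsMLPLayer V (m + n + n) fun v ↦ Fin.append (Fin.append (g v) (h v)) (-h v) := by
    simpa only [affineAppend_apply, AffineMap.id_apply, AffineMap.coe_neg, Pi.neg_apply,
      appendSnd_append] using hgh.affine_comp (affineAppend (.id ℝ _) (-appendSnd m n))
  let P := appendFst (m + n) n
  let recombine := affineAppend (A.comp ((appendFst m n).comp P))
    ((appendSnd m n).comp P - appendSnd (m + n) n)
  convert IsMLPLayer.step _ _ recombine _ doubled using 2 with v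
  have silu_append {p q : ℕ} (x : Fin p → ℝ) (y : Fin q → ℝ) :
      (fun i ↦ silu (Fin.append x y i)) = Fin.append (fun i ↦ silu (x i)) fun i ↦ silu (y i) :=
    funext fun i ↦ by induction i using Fin.addCases <;> simp
  have silu_sub : ((fun i ↦ silu (h v i)) - fun i ↦ silu ((-h v) i)) = h v :=
    funext fun i ↦ silu_sub_silu_neg (h v i)
  simp only [recombine, P, affineAppend_apply, AffineMap.comp_apply, AffineMap.coe_sub,
    Pi.sub_apply, silu_append, appendFst_append, appendSnd_append, silu_sub]

theorem append (hg : IsMLPLayer V m g) (hh : IsMLPLayer V n h) :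
    IsMLPLayer V (m + n) fun v ↦ Fin.append (g v) (h v) := by
  induction hg with
  | affine m A =>
    induction hh with
    | affine n B =>
      simpa only [funext (affineAppend_apply A B)] using IsMLPLayer.affine _ (affineAppend A B)
    | step _ _ B _ _ ih => exact (ih.append_swap.append_step B).append_swap
  | step _ _ A _ _ ih => exact ih.append_step A

end IsMLPLayer

theorem isSiluMLP_iff {f : V → ℝ} :
    IsSiluMLP V f ↔ ∃ (m : ℕ) (g : V → Fin m → ℝ), IsMLPLayer V m g ∧
      ∃ A : (Fin m → ℝ) →ᵃ[ℝ] ℝ, f = fun v ↦ A (g v) := by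
  constructor
  · rintro (⟨A, rfl⟩ | ⟨m, A, g, hg, rfl⟩)
    · exact ⟨1, _, .affine 1 (AffineMap.pi fun _ ↦ A), AffineMap.proj 0, rfl⟩
    · exact ⟨m, _, .step m m (.id ℝ _) g hg, A, rfl⟩
  · rintro ⟨m, g, ⟨_, B⟩ | ⟨l, _, B, g', hg'⟩, A, rfl⟩
    · exact .inl ⟨A.comp B, rfl⟩
    · exact .inr ⟨l, A.comp B, g', hg', rfl⟩

namespace IsSiluMLP

variable {f f' : V → ℝ}

theorem of_affine (A : V →ᵃ[ℝ] ℝ) : IsSiluMLP V A :=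
  .inl ⟨A, rfl⟩

theorem add (hf : IsSiluMLP V f) (hf' : IsSiluMLP V f') : IsSiluMLP V (f + f') := by
  obtain ⟨m, g, hg, A, rfl⟩ := isSiluMLP_iff.1 hf
  obtain ⟨n, h, hh, B, rfl⟩ := isSiluMLP_iff.1 hf'
  refine isSiluMLP_iff.2
    ⟨m + n, _, hg.append hh, A.comp (appendFst m n) + B.comp (appendSnd m n), ?_⟩
  ext v
  simp only [Pi.add_apply, AffineMap.coe_add, AffineMap.comp_apply, appendFst_append,
    appendSnd_append]

theorem const_smul (c : ℝ) (hf : IsSiluMLP V f) : IsSiluMLP V (c • f) := by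
  obtain ⟨m, g, hg, A, rfl⟩ := isSiluMLP_iff.1 hf
  exact isSiluMLP_iff.2 ⟨m, g, hg, c • A, rfl⟩

theorem silu_comp (hf : IsSiluMLP V f) : IsSiluMLP V fun v ↦ silu (f v) := by
  obtain ⟨m, g, hg, A, rfl⟩ := isSiluMLP_iff.1 hf
  exact .inr ⟨1, AffineMap.proj 0, _, hg.affine_comp (AffineMap.pi fun _ ↦ A), rfl⟩

end IsSiluMLP

end Network

section Density

theorem mul_mem_of_forall_sq_mem {𝕜 R : Type*} [Field 𝕜] [NeZero (2 : 𝕜)] [CommRing R]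
    [Algebra 𝕜 R] {S : Submodule 𝕜 R} (hsq : ∀ a ∈ S, a ^ 2 ∈ S) {a b : R} (ha : a ∈ S)
    (hb : b ∈ S) : a * b ∈ S := by
  have polarization : a * b = (2⁻¹ : 𝕜) • ((a + b) ^ 2 - a ^ 2 - b ^ 2) := by
    rw [eq_inv_smul_iff₀ two_ne_zero, two_smul]
    ring
  rw [polarization]
  exact S.smul_mem _ (S.sub_mem (S.sub_mem (hsq _ (S.add_mem ha hb)) (hsq a ha)) (hsq b hb))

variable {X : Type*} [TopologicalSpace X] [CompactSpace X]

theorem tendsto_inv_sq_smul_comp_smul {ψ : C(ℝ, ℝ)} {c : ℝ}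
    (hψ : (fun s ↦ ψ s - c * s ^ 2) =o[𝓝 0] fun s ↦ s ^ 2) (f : C(X, ℝ)) :
    Tendsto (fun t : ℝ ↦ (t ^ 2)⁻¹ • ψ.comp (t • f)) (𝓝[≠] 0) (𝓝 (c • f ^ 2)) := by
  refine Metric.tendsto_nhds.2 fun ε hε ↦ ?_
  obtain ⟨η, hη, hηε⟩ : ∃ η > 0, η * ‖f‖ ^ 2 < ε :=
    ⟨ε / (‖f‖ ^ 2 + 1), by positivity, by
      rw [div_mul_eq_mul_div, div_lt_iff₀ (by positivity)]
      nlinarith⟩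
  obtain ⟨δ, hδ, hψδ⟩ := Metric.eventually_nhds_iff.1 (hψ.def hη)
  have hsmall : ∀ᶠ t : ℝ in 𝓝[≠] 0, ‖t • f‖ < δ :=
    nhdsWithin_le_nhds <| (continuous_id.smul continuous_const).norm.tendsto' 0 0 (by simp)
      |>.eventually_lt_const hδ
  filter_upwards [hsmall, self_mem_nhdsWithin] with t htδ (ht : t ≠ 0)
  refine lt_of_le_of_lt ((ContinuousMap.dist_le (by positivity)).2 fun x ↦ ?_) hηε
  have hx : |t * f x| < δ := ((t • f).norm_coe_le_norm x).trans_lt htδ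
  have hψx : |ψ (t * f x) - c * (t * f x) ^ 2| ≤ η * (t * f x) ^ 2 := by
    simpa using hψδ (by simpa using hx)
  calc dist ((t ^ 2)⁻¹ * ψ (t * f x)) (c * f x ^ 2)
      = |ψ (t * f x) - c * (t * f x) ^ 2| / t ^ 2 := by
        rw [Real.dist_eq, ← abs_sq t, ← abs_div, abs_sq]
        congr 1
        field_simp
    _ ≤ η * (t * f x) ^ 2 / t ^ 2 := by gcongr
    _ = η * f x ^ 2 := by field_simp
    _ ≤ η * ‖f‖ ^ 2 := by
      gcongr η * ?_
      exact sq_le_sq.2 ((f.norm_coe_le_norm x).trans (le_abs_self _))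

theorem sq_mem_topologicalClosure_of_comp_mem {S : Submodule ℝ C(X, ℝ)} {ψ : C(ℝ, ℝ)} {c : ℝ}
    (hc : c ≠ 0) (hψ : (fun s ↦ ψ s - c * s ^ 2) =o[𝓝 0] fun s ↦ s ^ 2)
    (hS : ∀ f ∈ S, ψ.comp f ∈ S) {f : C(X, ℝ)} (hf : f ∈ S) : f ^ 2 ∈ S.topologicalClosure := by
  have hcf : c • f ^ 2 ∈ S.topologicalClosure :=
    mem_closure_of_tendsto (tendsto_inv_sq_smul_comp_smul hψ f) <| .of_forall fun t ↦
      S.smul_mem _ (hS _ (S.smul_mem t hf))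
  exact (Submodule.smul_mem_iff _ hc).1 hcf

theorem topologicalClosure_eq_top_of_sq_mem_topologicalClosure {S : Submodule ℝ C(X, ℝ)}
    (hone : 1 ∈ S) (hsep : ∀ x y, x ≠ y → ∃ f ∈ S, f x ≠ f y)
    (hsq : ∀ f ∈ S, f ^ 2 ∈ S.topologicalClosure) : S.topologicalClosure = ⊤ := by
  have hsq_closure : ∀ f ∈ S.topologicalClosure, f ^ 2 ∈ S.topologicalClosure := fun f hf ↦
    closure_minimal (t := (· ^ 2) ⁻¹' (S.topologicalClosure : Set C(X, ℝ))) hsq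
      (S.isClosed_topologicalClosure.preimage (continuous_pow 2)) hf
  let 𝒜 : Subalgebra ℝ C(X, ℝ) := S.topologicalClosure.toSubalgebra
    (S.le_topologicalClosure hone) fun _ _ ↦ mul_mem_of_forall_sq_mem hsq_closure
  have h𝒜 : 𝒜.topologicalClosure = ⊤ := by
    refine ContinuousMap.subalgebra_topologicalClosure_eq_top_of_separatesPoints 𝒜 fun x y hxy ↦ ?_
    obtain ⟨f, hf, hfxy⟩ := hsep x y hxy
    exact ⟨f, ⟨f, S.le_topologicalClosure hf, rfl⟩, hfxy⟩
  refine SetLike.coe_injective ?_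
  calc (S.topologicalClosure : Set C(X, ℝ))
      = 𝒜.topologicalClosure := S.isClosed_topologicalClosure.closure_eq.symm
    _ = Set.univ := by rw [h𝒜, Algebra.coe_top]

end Density

section UniversalApproximation

variable {V : Type} [AddCommGroup V] [Module ℝ V] {X : Type*} [TopologicalSpace X]

/-- The continuous functions on `X` of the form `mlp ∘ φ`, for `mlp` a SiLU multilayer perceptron
on `V`. -/
def mlpComp (φ : X → V) : Submodule ℝ C(X, ℝ) where
  carrier := {f | ∃ mlp, IsSiluMLP V mlp ∧ ∀ x, f x = mlp (φ x)}
  add_mem' := by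
    rintro f f' ⟨mlp, hmlp, hf⟩ ⟨mlp', hmlp', hf'⟩
    exact ⟨mlp + mlp', hmlp.add hmlp', fun x ↦ congrArg₂ (· + ·) (hf x) (hf' x)⟩
  zero_mem' := ⟨_, .of_affine 0, fun _ ↦ rfl⟩
  smul_mem' := by
    rintro c f ⟨mlp, hmlp, hf⟩
    exact ⟨c • mlp, hmlp.const_smul c, fun x ↦ congrArg (c * ·) (hf x)⟩

theorem silu_comp_mem_mlpComp {φ : X → V} {f : C(X, ℝ)} (hf : f ∈ mlpComp φ) :
    (⟨silu, continuous_silu⟩ : C(ℝ, ℝ)).comp f ∈ mlpComp φ := by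
  obtain ⟨mlp, hmlp, hf⟩ := hf
  exact ⟨_, hmlp.silu_comp, fun x ↦ congrArg silu (hf x)⟩

theorem sq_mem_topologicalClosure_mlpComp [CompactSpace X] {φ : X → V} {f : C(X, ℝ)}
    (hf : f ∈ mlpComp φ) : f ^ 2 ∈ (mlpComp φ).topologicalClosure := by
  let ψ : C(ℝ, ℝ) :=
    ⟨fun s ↦ silu s + silu (-s), continuous_silu.add (continuous_silu.comp continuous_neg)⟩
  refine sq_mem_topologicalClosure_of_comp_mem (ψ := ψ) (one_div_ne_zero two_ne_zero)
    silu_add_silu_neg_sub_isLittleO (fun g hg ↦ ?_) hf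
  exact (mlpComp φ).add_mem (silu_comp_mem_mlpComp hg)
    (silu_comp_mem_mlpComp ((mlpComp φ).neg_mem hg))

variable [TopologicalSpace V] [SeparatingDual ℝ V]

theorem topologicalClosure_mlpComp_eq_top [CompactSpace X] {φ : X → V} (hφ : Continuous φ)
    (hinj : Injective φ) : (mlpComp φ).topologicalClosure = ⊤ := by
  refine topologicalClosure_eq_top_of_sq_mem_topologicalClosure
    ⟨_, .of_affine (AffineMap.const ℝ V 1), fun _ ↦ rfl⟩ (fun x y hxy ↦ ?_)
    fun _ ↦ sq_mem_topologicalClosure_mlpComp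
  obtain ⟨ℓ, hℓ⟩ := SeparatingDual.exists_separating_of_ne (R := ℝ) (hinj.ne hxy)
  exact ⟨⟨ℓ ∘ φ, ℓ.continuous.comp hφ⟩,
    ⟨_, .of_affine (ℓ : V →ₗ[ℝ] ℝ).toAffineMap, fun _ ↦ rfl⟩, hℓ⟩

theorem exists_isSiluMLP_comp_near {K : Set X} (hK : IsCompact K) {φ : X → V}
    (hφ : ContinuousOn φ K) (hinj : K.InjOn φ) {f : X → ℝ} (hf : ContinuousOn f K) {ε : ℝ}
    (hε : 0 < ε) : ∃ mlp, IsSiluMLP V mlp ∧ ∀ x ∈ K, |f x - mlp (φ x)| < ε := by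
  have : CompactSpace K := isCompact_iff_compactSpace.1 hK
  let F : C(K, ℝ) := ⟨K.domRestrict f, hf.domRestrict⟩
  have hF : F ∈ (mlpComp (K.domRestrict φ)).topologicalClosure := by
    rw [topologicalClosure_mlpComp_eq_top hφ.domRestrict hinj.injective]
    trivial
  obtain ⟨G, ⟨mlp, hmlp, hG⟩, hFG⟩ := Metric.mem_closure_iff.1 hF ε hε
  refine ⟨mlp, hmlp, fun x hx ↦ ?_⟩
  calc |f x - mlp (φ x)| = dist (F ⟨x, hx⟩) (G ⟨x, hx⟩) := by rw [hG, Real.dist_eq]; rfl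
    _ ≤ dist F G := ContinuousMap.dist_apply_le_dist _
    _ < ε := hFG

end UniversalApproximation

theorem stmt_1_general {n d : Type} [Fintype n] [Fintype d] (A : Matrix n n ℝ) (W : Matrix d d ℝ)
    (hAW : Injective fun X : Matrix n d ℝ ↦ A * X * W + X) {K : Set (Matrix n d ℝ)}
    (hK : IsCompact K) {f : Matrix n d ℝ → ℝ} (hf : ContinuousOn f K) {ε : ℝ} (hε : 0 < ε) :
    ∃ mlp : Matrix n d ℝ → ℝ, IsSiluMLP _ mlp ∧ ∀ X ∈ K, |f X - mlp (A * X * W + X)| < ε := by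
  have : SeparatingDual ℝ (Matrix n d ℝ) := inferInstanceAs (SeparatingDual ℝ (n → d → ℝ))
  exact exists_isSiluMLP_comp_near hK (by fun_prop) hAW.injOn hf hε

/-- **Universal approximation via graph convolution is possible with residual connections.**
For positive `N, D` and `Ã` the matrix with all entries `1/N`, there exists `W ∈ ℝ^{D×D}`
such that the class of maps `MLP ∘ L` with `L(X) = Ã X W + X` and `MLP` a SiLU multilayer
perceptron is a universal approximator in `C(ℝ^{N×D})`. -/
theorem stmt_1 (N D : ℕ) (hN : 0 < N) (hD : 0 < D)
    (Atil : Matrix (Fin N) (Fin N) ℝ) (hA : ∀ i j, Atil i j = 1 / N) :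
    ∃ W : Matrix (Fin D) (Fin D) ℝ,
      ∀ f : Matrix (Fin N) (Fin D) ℝ → ℝ, Continuous f →
        ∀ ε > (0 : ℝ), ∀ K : Set (Matrix (Fin N) (Fin D) ℝ), IsCompact K → K.Nonempty →
          ∃ mlp : Matrix (Fin N) (Fin D) ℝ → ℝ, IsSiluMLP _ mlp ∧
            ∀ X ∈ K, |f X - mlp (Atil * X * W + X)| < ε :=
  ⟨0, fun _ hf _ hε _ hK _ ↦
    stmt_1_general Atil 0 (fun X Y hXY ↦ by simpa using hXY) hK hf.continuousOn hε⟩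
end

section
/- Let D be a positive integer and let W̃ be a D×D random matrix whose entries are independent standard normal random variables (i.e., W̃ is distributed according to the product of D² standard Gaussian measures on ℝ^{D×D}). Then the probability that the largest singular value of W̃ satisfies s_max(W̃) ≤ 3·√D is at least 1 − e^{−D/2}. -/
open MeasureTheory ProbabilityTheory

/-!
For unit vectors `x`, the image `W x` is a standard Gaussian vector, so
`𝔼 exp (s ‖W x‖² / 2) = (1 - s) ^ (-m / 2)`. To pass from fixed `x` to the supremum over `x` without
an ε-net, average over an independent standard Gaussian vector `x`: for every fixed operator `T`,
`𝔼 exp (‖T x‖² / (2 ‖x‖²)) ≥ (1 - r) ^ (n / 2) * exp (r ‖T‖² / 2)`.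
Indeed `‖T x‖ ≥ |⟪z, x⟫|` for some `z` of norm `‖T‖`, and by AM-GM
`⟪z, x⟫² / (2 ‖x‖²) ≥ t ⟪z, x⟫ - t² ‖x‖² / 2`, whose exponential has an explicit Gaussian integral.
Taking `T = √s W` and exchanging the two expectations gives
`𝔼 exp (r s ‖W‖² / 2) ≤ (1 - r) ^ (-n / 2) * (1 - s) ^ (-m / 2)` for an `m × n` matrix `W`,
and Markov's inequality with `r = s = 3 / 4` concludes.
-/

open scoped ENNReal RealInnerProductSpace Matrix.Norms.L2Operator

section GaussianIntegrals

lemma gaussianPDFReal_zero_one_mul_exp {a b : ℝ} (hb : 0 < 1 + 2 * b) (x : ℝ) :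
    gaussianPDFReal 0 1 x * Real.exp (a * x - b * x ^ 2) =
      (√(1 + 2 * b))⁻¹ * Real.exp (a ^ 2 / (2 * (1 + 2 * b))) *
        gaussianPDFReal (a / (1 + 2 * b)) (Real.toNNReal (1 + 2 * b)⁻¹) x := by
  have hexp : Real.exp (-(x - 0) ^ 2 / (2 * 1)) * Real.exp (a * x - b * x ^ 2) =
      Real.exp (a ^ 2 / (2 * (1 + 2 * b))) *
        Real.exp (-(x - a / (1 + 2 * b)) ^ 2 / (2 * (1 + 2 * b)⁻¹)) := by
    rw [← Real.exp_add, ← Real.exp_add]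
    congr 1
    field_simp
    ring
  have hsqrt : √(2 * Real.pi * (1 + 2 * b)⁻¹) = √(2 * Real.pi) * (√(1 + 2 * b))⁻¹ := by
    rw [Real.sqrt_mul (by positivity), Real.sqrt_inv]
  simp only [gaussianPDFReal, Real.coe_toNNReal _ (inv_nonneg.2 hb.le), NNReal.coe_one]
  rw [mul_assoc, hexp, hsqrt, mul_one]
  field_simp

lemma lintegral_exp_mul_sub_sq_gaussianReal (a : ℝ) {b : ℝ} (hb : 0 < 1 + 2 * b) :
    ∫⁻ x, ENNReal.ofReal (Real.exp (a * x - b * x ^ 2)) ∂gaussianReal 0 1 =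
      ENNReal.ofReal ((√(1 + 2 * b))⁻¹ * Real.exp (a ^ 2 / (2 * (1 + 2 * b)))) := by
  have hv : Real.toNNReal (1 + 2 * b)⁻¹ ≠ 0 := by simpa using hb
  rw [gaussianReal_of_var_ne_zero 0 one_ne_zero,
    lintegral_withDensity_eq_lintegral_mul _ (measurable_gaussianPDF 0 1) (by fun_prop)]
  simp only [Pi.mul_apply, gaussianPDF, ← ENNReal.ofReal_mul (gaussianPDFReal_nonneg _ _ _),
    gaussianPDFReal_zero_one_mul_exp hb]
  simp_rw [ENNReal.ofReal_mul (show 0 ≤ (√(1 + 2 * b))⁻¹ *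
    Real.exp (a ^ 2 / (2 * (1 + 2 * b))) by positivity)]
  rw [lintegral_const_mul _ (by fun_prop), lintegral_gaussianPDFReal_eq_one _ hv, mul_one]

lemma lintegral_pi_prod_eval {ι : Type*} [Fintype ι] {X : ι → Type*} [∀ i, MeasurableSpace (X i)]
    (μ : ∀ i, Measure (X i)) [∀ i, IsProbabilityMeasure (μ i)] {f : ∀ i, X i → ℝ≥0∞}
    (hf : ∀ i, Measurable (f i)) :
    ∫⁻ x, ∏ i, f i (x i) ∂Measure.pi μ = ∏ i, ∫⁻ y, f i y ∂μ i := by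
  have hindep : iIndepFun (fun i (x : ∀ i, X i) => f i (x i)) (Measure.pi μ) :=
    iIndepFun_pi fun i => (hf i).aemeasurable
  rw [lintegral_prod_eq_prod_lintegral_of_indepFun _ _ hindep fun i => by fun_prop]
  exact Finset.prod_congr rfl fun i _ => (measurePreserving_eval μ i).lintegral_comp (hf i)

lemma ofReal_exp_sum {ι : Type*} (s : Finset ι) (g : ι → ℝ) :
    ENNReal.ofReal (Real.exp (∑ i ∈ s, g i)) = ∏ i ∈ s, ENNReal.ofReal (Real.exp (g i)) := by
  rw [Real.exp_sum, ENNReal.ofReal_prod_of_nonneg fun _ _ => (Real.exp_pos _).le]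

end GaussianIntegrals

section StdGaussian

variable {E : Type*} [NormedAddCommGroup E] [InnerProductSpace ℝ E] [FiniteDimensional ℝ E]
  [MeasurableSpace E] [BorelSpace E]

lemma lintegral_exp_inner_sub_norm_sq_stdGaussian (z : E) {b : ℝ} (hb : 0 < 1 + 2 * b) :
    ∫⁻ x, ENNReal.ofReal (Real.exp (⟪z, x⟫ - b * ‖x‖ ^ 2)) ∂stdGaussian E =
      ENNReal.ofReal ((√(1 + 2 * b))⁻¹ ^ Module.finrank ℝ E *
        Real.exp (‖z‖ ^ 2 / (2 * (1 + 2 * b)))) := by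
  set e := stdOrthonormalBasis ℝ E
  have hcoord (y : Fin (Module.finrank ℝ E) → ℝ) :
      ⟪z, ∑ i, y i • e i⟫ - b * ‖∑ i, y i • e i‖ ^ 2 =
        ∑ i, (⟪z, e i⟫ * y i - b * y i ^ 2) := by
    have hnorm : ‖∑ i, y i • e i‖ ^ 2 = ∑ i, y i ^ 2 := by
      rw [← e.sum_sq_norm_inner_right]
      simp [inner_sum, inner_smul_right, e.inner_eq_ite]
    rw [hnorm, inner_sum, Finset.sum_sub_distrib, Finset.mul_sum]
    simp only [inner_smul_right, mul_comm]
  rw [stdGaussian_eq_map_pi_orthonormalBasis e, lintegral_map (by fun_prop) (by fun_prop)]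
  simp_rw [hcoord, ofReal_exp_sum]
  rw [lintegral_pi_prod_eval _
    (f := fun i t => ENNReal.ofReal (Real.exp (⟪z, e i⟫ * t - b * t ^ 2))) (by fun_prop)]
  simp_rw [lintegral_exp_mul_sub_sq_gaussianReal _ hb]
  rw [← ENNReal.ofReal_prod_of_nonneg fun _ _ => by positivity, Finset.prod_mul_distrib,
    ← Real.exp_sum, ← Finset.sum_div, ← e.sum_sq_norm_inner_left]
  simp

lemma map_inner_stdGaussian (x : E) :
    (stdGaussian E).map (fun y => ⟪x, y⟫) = (gaussianReal 0 1).map (‖x‖ * ·) := by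
  have h := IsGaussian.map_eq_gaussianReal (μ := stdGaussian E) (innerSL ℝ x)
  rw [integral_strongDual_stdGaussian, variance_dual_stdGaussian, innerSL_apply_norm] at h
  rw [Real.toNNReal_of_nonneg (sq_nonneg _)] at h
  rw [gaussianReal_map_const_mul, mul_zero, mul_one]
  exact h

lemma lintegral_exp_inner_sq_stdGaussian {x : E} {s : ℝ} (hs : s * ‖x‖ ^ 2 < 1) :
    ∫⁻ y, ENNReal.ofReal (Real.exp (s / 2 * ⟪x, y⟫ ^ 2)) ∂stdGaussian E =
      ENNReal.ofReal (√(1 - s * ‖x‖ ^ 2))⁻¹ := by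
  calc _ = ∫⁻ t, ENNReal.ofReal (Real.exp (s / 2 * t ^ 2))
        ∂(stdGaussian E).map (fun y => ⟪x, y⟫) := by
        rw [lintegral_map (by fun_prop) (by fun_prop)]
    _ = ∫⁻ t, ENNReal.ofReal (Real.exp (0 * t - -(s * ‖x‖ ^ 2 / 2) * t ^ 2))
        ∂gaussianReal 0 1 := by
        rw [map_inner_stdGaussian, lintegral_map (by fun_prop) (by fun_prop)]
        refine lintegral_congr fun t => ?_
        ring_nf
    _ = _ := by
        rw [lintegral_exp_mul_sub_sq_gaussianReal _ (by linarith)]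
        ring_nf
        simp

lemma ofReal_exp_norm_sq_le_lintegral_exp_inner_normalize_sq (z : E) {r : ℝ} (hr₀ : 0 ≤ r)
    (hr₁ : r < 1) :
    ENNReal.ofReal (Real.exp (r / 2 * ‖z‖ ^ 2)) ≤
      ENNReal.ofReal ((√(1 - r))⁻¹ ^ Module.finrank ℝ E) *
        ∫⁻ x, ENNReal.ofReal (Real.exp (⟪z, ‖x‖⁻¹ • x⟫ ^ 2 / 2)) ∂stdGaussian E := by
  -- this tilt makes `1 + t² = 1 / (1 - r)`, so that `t² / (1 + t²) = r`
  set t := √(r / (1 - r))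
  have hr : 0 < 1 - r := sub_pos.2 hr₁
  have ht : t ^ 2 = r / (1 - r) := Real.sq_sqrt (by positivity)
  have ht' : 1 + 2 * (t ^ 2 / 2) = (1 - r)⁻¹ := by
    rw [ht]
    field_simp
    ring
  have hpoint (x : E) :
      ⟪t • z, x⟫ - t ^ 2 / 2 * ‖x‖ ^ 2 ≤ ⟪z, ‖x‖⁻¹ • x⟫ ^ 2 / 2 := by
    have hx : ⟪t • z, x⟫ = t * ‖x‖ * ⟪z, ‖x‖⁻¹ • x⟫ := by
      rcases eq_or_ne x 0 with rfl | hx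
      · simp
      · rw [real_inner_smul_left, real_inner_smul_right, mul_assoc,
          mul_inv_cancel_left₀ (norm_ne_zero_iff.2 hx)]
    rw [hx]
    linarith [two_mul_le_add_sq (t * ‖x‖) ⟪z, ‖x‖⁻¹ • x⟫, mul_pow t ‖x‖ 2]
  have hsqrt : (√(1 - r))⁻¹ ^ Module.finrank ℝ E * √(1 - r) ^ Module.finrank ℝ E = 1 := by
    rw [← mul_pow, inv_mul_cancel₀ (Real.sqrt_pos.2 hr).ne', one_pow]
  have htilt : t ^ 2 * ‖z‖ ^ 2 / (2 * (1 - r)⁻¹) = r / 2 * ‖z‖ ^ 2 := by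
    rw [ht]
    field_simp
  calc ENNReal.ofReal (Real.exp (r / 2 * ‖z‖ ^ 2))
      = ENNReal.ofReal ((√(1 - r))⁻¹ ^ Module.finrank ℝ E) *
          ∫⁻ x, ENNReal.ofReal (Real.exp (⟪t • z, x⟫ - t ^ 2 / 2 * ‖x‖ ^ 2)) ∂stdGaussian E := by
        rw [lintegral_exp_inner_sub_norm_sq_stdGaussian _ (by positivity), ht', norm_smul,
          mul_pow, Real.norm_eq_abs, sq_abs, htilt, Real.sqrt_inv, inv_inv,
          ← ENNReal.ofReal_mul (by positivity), ← mul_assoc, hsqrt, one_mul]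
    _ ≤ _ := by
        gcongr with x
        exact hpoint x

end StdGaussian

section OperatorNorm

lemma exists_norm_le_one_norm_apply_eq_opNorm {E F : Type*} [NormedAddCommGroup E]
    [NormedSpace ℝ E] [FiniteDimensional ℝ E] [NormedAddCommGroup F] [NormedSpace ℝ F]
    (T : E →L[ℝ] F) : ∃ x, ‖x‖ ≤ 1 ∧ ‖T x‖ = ‖T‖ := by
  have hcompact : IsCompact ((fun x => ‖T x‖) '' Metric.closedBall 0 1) :=
    (isCompact_closedBall 0 1).image (by fun_prop)
  have hmem := hcompact.sSup_mem ((Metric.nonempty_closedBall.2 zero_le_one).image _)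
  rw [T.sSup_unitClosedBall_eq_norm] at hmem
  simpa using hmem

variable {E F : Type*} [NormedAddCommGroup E] [InnerProductSpace ℝ E]
  [NormedAddCommGroup F] [InnerProductSpace ℝ F] [FiniteDimensional ℝ F]

lemma exists_norm_eq_opNorm_abs_inner_le_norm_apply [CompleteSpace E] (T : E →L[ℝ] F) :
    ∃ z : E, ‖z‖ = ‖T‖ ∧ ∀ x, |⟪z, x⟫| ≤ ‖T x‖ := by
  obtain ⟨v, hv, hTv⟩ := exists_norm_le_one_norm_apply_eq_opNorm T.adjoint
  refine ⟨T.adjoint v, by simpa using hTv, fun x => ?_⟩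
  rw [ContinuousLinearMap.adjoint_inner_left]
  exact (abs_real_inner_le_norm v (T x)).trans (mul_le_of_le_one_left (norm_nonneg _) hv)

variable [FiniteDimensional ℝ E] [MeasurableSpace E] [BorelSpace E]

lemma ofReal_exp_opNorm_sq_le_lintegral_exp_norm_apply_normalize_sq (T : E →L[ℝ] F) {r : ℝ}
    (hr₀ : 0 ≤ r) (hr₁ : r < 1) :
    ENNReal.ofReal (Real.exp (r / 2 * ‖T‖ ^ 2)) ≤
      ENNReal.ofReal ((√(1 - r))⁻¹ ^ Module.finrank ℝ E) *
        ∫⁻ x, ENNReal.ofReal (Real.exp (‖T (‖x‖⁻¹ • x)‖ ^ 2 / 2)) ∂stdGaussian E := by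
  obtain ⟨z, hz, hzT⟩ := exists_norm_eq_opNorm_abs_inner_le_norm_apply T
  rw [← hz]
  refine (ofReal_exp_norm_sq_le_lintegral_exp_inner_normalize_sq z hr₀ hr₁).trans ?_
  gcongr ENNReal.ofReal _ * ∫⁻ x, ENNReal.ofReal (Real.exp (?_ / 2)) ∂_
  exact sq_le_sq.2 ((hzT _).trans (le_abs_self _))

lemma lintegral_exp_opNorm_sq_le {Ω : Type*} [MeasurableSpace Ω] {P : Measure Ω} [SFinite P]
    {T : Ω → E →L[ℝ] F} (hT : Measurable T) {C : ℝ≥0∞}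
    (hC : ∀ x, ‖x‖ ≤ 1 → ∫⁻ ω, ENNReal.ofReal (Real.exp (‖T ω x‖ ^ 2 / 2)) ∂P ≤ C)
    {r : ℝ} (hr₀ : 0 ≤ r) (hr₁ : r < 1) :
    ∫⁻ ω, ENNReal.ofReal (Real.exp (r / 2 * ‖T ω‖ ^ 2)) ∂P ≤
      ENNReal.ofReal ((√(1 - r))⁻¹ ^ Module.finrank ℝ E) * C := by
  borelize F
  have hTx : Measurable fun p : Ω × E => T p.1 (‖p.2‖⁻¹ • p.2) :=
    ContinuousLinearMap.measurable_apply₂.comp ((hT.comp measurable_fst).prodMk (by fun_prop))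
  have hexp : Measurable fun p : Ω × E =>
      ENNReal.ofReal (Real.exp (‖T p.1 (‖p.2‖⁻¹ • p.2)‖ ^ 2 / 2)) :=
    ((hTx.norm.pow_const 2).div_const 2).exp.ennreal_ofReal
  have hnormalize (x : E) : ‖‖x‖⁻¹ • x‖ ≤ 1 := by
    rw [norm_smul, norm_inv, norm_norm]
    exact inv_mul_le_one
  calc ∫⁻ ω, ENNReal.ofReal (Real.exp (r / 2 * ‖T ω‖ ^ 2)) ∂P
      ≤ ∫⁻ ω, ENNReal.ofReal ((√(1 - r))⁻¹ ^ Module.finrank ℝ E) *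
          ∫⁻ x, ENNReal.ofReal (Real.exp (‖T ω (‖x‖⁻¹ • x)‖ ^ 2 / 2)) ∂stdGaussian E ∂P :=
        lintegral_mono fun ω =>
          ofReal_exp_opNorm_sq_le_lintegral_exp_norm_apply_normalize_sq (T ω) hr₀ hr₁
    _ = ENNReal.ofReal ((√(1 - r))⁻¹ ^ Module.finrank ℝ E) *
          ∫⁻ x, ∫⁻ ω, ENNReal.ofReal (Real.exp (‖T ω (‖x‖⁻¹ • x)‖ ^ 2 / 2)) ∂P ∂stdGaussian E := by
        rw [lintegral_const_mul' _ _ ENNReal.ofReal_ne_top,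
          lintegral_lintegral_swap hexp.aemeasurable]
    _ ≤ ENNReal.ofReal ((√(1 - r))⁻¹ ^ Module.finrank ℝ E) * ∫⁻ _, C ∂stdGaussian E := by
        gcongr with x
        exact hC _ (hnormalize x)
    _ = _ := by simp

end OperatorNorm

section GaussianMatrix

/-- The law of a random matrix with independent standard normal entries, as a measure on
`m → n → ℝ` (on which, unlike on `Matrix m n ℝ`, the product `σ`-algebra is an instance). -/
noncomputable abbrev gaussianMatrix (m n : Type*) [Fintype m] [Fintype n] : Measure (m → n → ℝ) :=
  Measure.pi fun _ => Measure.pi fun _ => gaussianReal 0 1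

variable {m n : Type*} [Fintype m] [Fintype n]

lemma lintegral_exp_sum_mul_sq_pi_gaussianReal (x : EuclideanSpace ℝ n) {s : ℝ}
    (hs : s * ‖x‖ ^ 2 < 1) :
    ∫⁻ w, ENNReal.ofReal (Real.exp (s / 2 * (∑ j, w j * x j) ^ 2))
        ∂(Measure.pi fun _ : n => gaussianReal 0 1) =
      ENNReal.ofReal (√(1 - s * ‖x‖ ^ 2))⁻¹ := by
  rw [← lintegral_exp_inner_sq_stdGaussian hs, ← map_pi_eq_stdGaussian,
    lintegral_map (by fun_prop) (by fun_prop)]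
  simp [PiLp.inner_apply]

variable [DecidableEq n]

lemma lintegral_exp_norm_apply_sq_gaussianMatrix (x : EuclideanSpace ℝ n) {s : ℝ}
    (hs : s * ‖x‖ ^ 2 < 1) :
    ∫⁻ W, ENNReal.ofReal (Real.exp (s / 2 * ‖Matrix.toEuclideanLin (Matrix.of W) x‖ ^ 2))
        ∂gaussianMatrix m n =
      ENNReal.ofReal ((√(1 - s * ‖x‖ ^ 2))⁻¹ ^ Fintype.card m) := by
  have hrows (W : m → n → ℝ) :
      s / 2 * ‖Matrix.toEuclideanLin (Matrix.of W) x‖ ^ 2 =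
        ∑ i, s / 2 * (∑ j, W i j * x j) ^ 2 := by
    rw [EuclideanSpace.real_norm_sq_eq, Finset.mul_sum]
    rfl
  simp_rw [hrows, ofReal_exp_sum]
  rw [lintegral_pi_prod_eval (fun _ : m => Measure.pi fun _ : n => gaussianReal 0 1)
    (f := fun _ w => ENNReal.ofReal (Real.exp (s / 2 * (∑ j, w j * x j) ^ 2))) (by fun_prop)]
  simp_rw [lintegral_exp_sum_mul_sq_pi_gaussianReal x hs]
  rw [Finset.prod_const, ← ENNReal.ofReal_pow (by positivity), Finset.card_univ]

lemma lintegral_exp_opNorm_sq_gaussianMatrix_le {r s : ℝ} (hr₀ : 0 ≤ r) (hr₁ : r < 1)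
    (hs₀ : 0 ≤ s) (hs₁ : s < 1) :
    ∫⁻ W, ENNReal.ofReal (Real.exp (r * s / 2 * ‖Matrix.of W‖ ^ 2)) ∂gaussianMatrix m n ≤
      ENNReal.ofReal ((√(1 - r))⁻¹ ^ Fintype.card n * (√(1 - s))⁻¹ ^ Fintype.card m) := by
  let T : (m → n → ℝ) →ₗ[ℝ] EuclideanSpace ℝ n →L[ℝ] EuclideanSpace ℝ m :=
    √s • (Matrix.toEuclideanLin.trans LinearMap.toContinuousLinearMap).toLinearMap ∘ₗ
      (Matrix.ofLinearEquiv ℝ).toLinearMap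
  have hT : Measurable T := T.continuous_of_finiteDimensional.measurable
  have hTx (x : EuclideanSpace ℝ n) (hx : ‖x‖ ≤ 1) :
      ∫⁻ W, ENNReal.ofReal (Real.exp (‖T W x‖ ^ 2 / 2)) ∂gaussianMatrix m n ≤
        ENNReal.ofReal ((√(1 - s))⁻¹ ^ Fintype.card m) := by
    have hsx : s * ‖x‖ ^ 2 ≤ s := mul_le_of_le_one_right hs₀ (pow_le_one₀ (norm_nonneg x) hx)
    have hnorm (W : m → n → ℝ) :
        ‖T W x‖ ^ 2 / 2 = s / 2 * ‖Matrix.toEuclideanLin (Matrix.of W) x‖ ^ 2 := by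
      change ‖√s • Matrix.toEuclideanLin (Matrix.of W) x‖ ^ 2 / 2 = _
      rw [norm_smul, mul_pow, Real.norm_eq_abs, sq_abs, Real.sq_sqrt hs₀]
      ring
    simp_rw [hnorm]
    rw [lintegral_exp_norm_apply_sq_gaussianMatrix x (hsx.trans_lt hs₁)]
    have : 0 < √(1 - s) := Real.sqrt_pos.2 (sub_pos.2 hs₁)
    gcongr
  have hopNorm (W : m → n → ℝ) : r / 2 * ‖T W‖ ^ 2 = r * s / 2 * ‖Matrix.of W‖ ^ 2 := by
    have : ‖T W‖ = √s * ‖Matrix.of W‖ := by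
      rw [Matrix.l2_opNorm_def, ← Real.norm_of_nonneg (Real.sqrt_nonneg s), ← norm_smul]
      rfl
    rw [this, mul_pow, Real.sq_sqrt hs₀]
    ring
  simpa [hopNorm, ENNReal.ofReal_mul] using lintegral_exp_opNorm_sq_le hT hTx hr₀ hr₁

lemma measurable_opNorm_of :
    Measurable fun W : m → n → ℝ => ‖Matrix.of W‖ := by
  have h : Continuous fun W : m → n → ℝ => ‖Matrix.of W‖ := continuous_norm (E := Matrix m n ℝ)
  exact h.measurable

lemma gaussianMatrix_le_opNorm_le {r s R : ℝ} (hr₀ : 0 ≤ r) (hr₁ : r < 1)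
    (hs₀ : 0 ≤ s) (hs₁ : s < 1) (hR : 0 ≤ R) :
    gaussianMatrix m n {W | R ≤ ‖Matrix.of W‖} ≤
      ENNReal.ofReal ((√(1 - r))⁻¹ ^ Fintype.card n * (√(1 - s))⁻¹ ^ Fintype.card m *
        Real.exp (-(r * s / 2 * R ^ 2))) := by
  set c := Real.exp (r * s / 2 * R ^ 2) with hc
  have hmeas := measurable_opNorm_of (m := m) (n := n)
  calc gaussianMatrix m n {W | R ≤ ‖Matrix.of W‖}
      ≤ gaussianMatrix m n {W | ENNReal.ofReal c ≤
          ENNReal.ofReal (Real.exp (r * s / 2 * ‖Matrix.of W‖ ^ 2))} := by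
        refine measure_mono fun W (hW : R ≤ ‖Matrix.of W‖) => ENNReal.ofReal_le_ofReal ?_
        rw [hc]
        gcongr
    _ ≤ (∫⁻ W, ENNReal.ofReal (Real.exp (r * s / 2 * ‖Matrix.of W‖ ^ 2)) ∂gaussianMatrix m n) /
          ENNReal.ofReal c :=
        meas_ge_le_lintegral_div ((hmeas.pow_const 2).const_mul _).exp.ennreal_ofReal.aemeasurable
          (by simp [hc, Real.exp_pos]) ENNReal.ofReal_ne_top
    _ ≤ _ := by
        rw [Real.exp_neg, ← div_eq_mul_inv, ENNReal.ofReal_div_of_pos (Real.exp_pos _)]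
        gcongr
        exact lintegral_exp_opNorm_sq_gaussianMatrix_le hr₀ hr₁ hs₀ hs₁

lemma two_pow_mul_exp_le (k : ℕ) :
    2 ^ k * Real.exp (-(81 / 64 * k)) ≤ Real.exp (-k / 4) := by
  have htwo : (2 : ℝ) ≤ Real.exp (65 / 64) := by linarith [Real.add_one_le_exp (65 / 64)]
  calc 2 ^ k * Real.exp (-(81 / 64 * k))
      ≤ Real.exp (65 / 64) ^ k * Real.exp (-(81 / 64 * k)) := by gcongr
    _ = Real.exp (-k / 4) := by
        rw [← Real.exp_nat_mul, ← Real.exp_add]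
        ring_nf

variable (m n) in
theorem stmt_11_general :
    ENNReal.ofReal (1 - Real.exp (-(Fintype.card m + Fintype.card n : ℝ) / 4)) ≤
      gaussianMatrix m n
        {W | ‖Matrix.of W‖ ≤ 3 * √((Fintype.card m + Fintype.card n : ℝ) / 2)} := by
  set N : ℝ := Fintype.card m + Fintype.card n
  have hN : ((Fintype.card m + Fintype.card n : ℕ) : ℝ) = N := Nat.cast_add _ _
  have hsqrt : (√(1 - 3 / 4))⁻¹ = 2 := by
    rw [show (1 - 3 / 4 : ℝ) = 2⁻¹ ^ 2 by norm_num, Real.sqrt_sq (by norm_num), inv_inv]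
  have htail : gaussianMatrix m n {W | ‖Matrix.of W‖ ≤ 3 * √(N / 2)}ᶜ ≤
      ENNReal.ofReal (Real.exp (-N / 4)) := by
    calc gaussianMatrix m n {W | ‖Matrix.of W‖ ≤ 3 * √(N / 2)}ᶜ
        ≤ gaussianMatrix m n {W | 3 * √(N / 2) ≤ ‖Matrix.of W‖} :=
          measure_mono fun W (hW : ¬ ‖Matrix.of W‖ ≤ 3 * √(N / 2)) => (not_le.1 hW).le
      _ ≤ ENNReal.ofReal ((√(1 - 3 / 4))⁻¹ ^ Fintype.card n * (√(1 - 3 / 4))⁻¹ ^ Fintype.card m *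
            Real.exp (-(3 / 4 * (3 / 4) / 2 * (3 * √(N / 2)) ^ 2))) :=
          gaussianMatrix_le_opNorm_le (by norm_num) (by norm_num) (by norm_num) (by norm_num)
            (by positivity)
      _ ≤ ENNReal.ofReal (Real.exp (-N / 4)) := by
          refine ENNReal.ofReal_le_ofReal ?_
          convert two_pow_mul_exp_le (Fintype.card m + Fintype.card n) using 2
          · rw [hsqrt, ← pow_add, add_comm]
          · rw [hN, mul_pow, Real.sq_sqrt (by positivity)]
            ring_nf
          · rw [hN]
  have hset : MeasurableSet {W : m → n → ℝ | ‖Matrix.of W‖ ≤ 3 * √(N / 2)} :=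
    measurableSet_le measurable_opNorm_of measurable_const
  rw [ENNReal.ofReal_sub _ (Real.exp_pos _).le, ENNReal.ofReal_one, tsub_le_iff_right,
    ← prob_add_prob_compl (μ := gaussianMatrix m n) hset]
  gcongr

end GaussianMatrix

/-- **Concentration version of Gordon's theorem, specialized.** If `W̃` is a `D × D`
random matrix with i.i.d. standard normal entries, then with probability at least
`1 - e^{-D/2}` its largest singular value (operator norm) is at most `3 √D`. -/
theorem stmt_11 (D : ℕ) (hD : 0 < D) :
    ENNReal.ofReal (1 - Real.exp (-(D : ℝ) / 2)) ≤
      (Measure.pi fun _ : Fin D => Measure.pi fun _ : Fin D => gaussianReal 0 1)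
        {W : Fin D → Fin D → ℝ |
          ‖Matrix.toEuclideanCLM (𝕜 := ℝ) (Matrix.of W)‖ ≤ 3 * Real.sqrt D} := by
  have h := stmt_11_general (Fin D) (Fin D)
  rw [Fintype.card_fin, add_self_div_two, show -(D + D : ℝ) / 4 = -D / 2 by ring] at h
  exact h
end
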